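/- Let n ≥ 1, d ∈ ℝ^n with d > 0 entrywise, y ∈ ℝ^n, and σ ∈ S_n. Then E_{d,y}(σ) ∈ M_d(y), i.e., there exists a d-stochastic matrix A with A·y = E_{d,y}(σ). -/

import Mathlib

open Finset

noncomputable def th {n : ℕ} (d y : Fin n → ℝ) (c : ℝ) : ℝ :=
  sInf ((fun i => (∑ j, max (y j - y i / d i * d j) 0) + y i / d i * c) ''
    {i : Fin n | 0 < d i})

noncomputable def psum {n : ℕ} (d : Fin n → ℝ) (σ : Equiv.Perm (Fin n)) (j : ℕ) : ℝ :=
  ∑ i ∈ Finset.univ.filter (fun i : Fin n => (i : ℕ) < j), d (σ i)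

noncomputable def Emap {n : ℕ} (d y : Fin n → ℝ) (σ : Equiv.Perm (Fin n)) : Fin n → ℝ :=
  fun k => th d y (psum d σ ((σ.symm k : ℕ) + 1)) - th d y (psum d σ (σ.symm k : ℕ))

def dStoch {n : ℕ} (d : Fin n → ℝ) (A : Matrix (Fin n) (Fin n) ℝ) : Prop :=
  (∀ i j, 0 ≤ A i j) ∧ (∀ j, ∑ i, A i j = 1) ∧ A.mulVec d = d

def Mset {n : ℕ} (d y : Fin n → ℝ) : Set (Fin n → ℝ) :=
  {x | ∃ A : Matrix (Fin n) (Fin n) ℝ, dStoch d A ∧ A.mulVec y = x}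

noncomputable def Aentry {n : ℕ} (d : Fin n → ℝ) (σ τ : Equiv.Perm (Fin n))
    (α : ℕ → Fin n) (j k : Fin n) : ℝ :=
  if k = α j.val ∧ (α j.val).val < (α (j.val + 1)).val then
    (psum d τ ((α j.val).val + 1) - psum d σ j.val) / d (τ (α j.val))
  else if (α j.val).val < k.val ∧ k.val < (α (j.val + 1)).val then 1
  else if (α j.val).val < (α (j.val + 1)).val ∧ k = α (j.val + 1) then
    (psum d σ (j.val + 1) - psum d τ (α (j.val + 1)).val) / d (τ (α (j.val + 1)))
  else if α j.val = α (j.val + 1) ∧ k = α (j.val + 1) then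
    d (σ j) / d (τ (α (j.val + 1)))
  else 0

noncomputable def Amat {n : ℕ} (d : Fin n → ℝ) (σ τ : Equiv.Perm (Fin n))
    (α : ℕ → Fin n) : Matrix (Fin n) (Fin n) ℝ :=
  Matrix.of fun p q => Aentry d σ τ α (σ.symm p) (τ.symm q)

lemma psum_zero' {n : ℕ} (d : Fin n → ℝ) (σ : Equiv.Perm (Fin n)) : psum d σ 0 = 0 := by
  simp [psum]

lemma psum_succ' {n : ℕ} (d : Fin n → ℝ) (σ : Equiv.Perm (Fin n)) (k : Fin n) :
    psum d σ ((k : ℕ) + 1) = psum d σ k + d (σ k) := by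
  unfold psum
  have : Finset.univ.filter (fun i : Fin n => (i : ℕ) < k + 1) =
      insert k (Finset.univ.filter (fun i : Fin n => (i : ℕ) < k)) := by
    ext i
    simp only [Finset.mem_filter, Finset.mem_univ, true_and, Finset.mem_insert, Fin.ext_iff]
    omega
  rw [this, Finset.sum_insert (by simp), add_comm]

lemma psum_last' {n : ℕ} (d : Fin n → ℝ) (σ : Equiv.Perm (Fin n)) :
    psum d σ n = ∑ i, d i := by
  unfold psum
  rw [Finset.filter_true_of_mem (by simp), Equiv.sum_comp σ d]

lemma psum_mono' {n : ℕ} (d : Fin n → ℝ) (hd : ∀ i, 0 < d i) (σ : Equiv.Perm (Fin n)) :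
    Monotone (psum d σ) := by
  intro a b hab
  unfold psum
  apply Finset.sum_le_sum_of_subset_of_nonneg
  · intro i
    simp only [Finset.mem_filter, Finset.mem_univ, true_and]
    omega
  · intro i _ _
    exact (hd _).le

lemma tele' {n : ℕ} (f : ℕ → ℝ) : ∑ k : Fin n, (f ((k : ℕ) + 1) - f k) = f n - f 0 := by
  rw [Fin.sum_univ_eq_sum_range (fun k => f (k + 1) - f k), Finset.sum_range_sub]

/-- length of the overlap of `[0,c]` with the `τ.symm q`-th interval -/
noncomputable def gov {n : ℕ} (d : Fin n → ℝ) (τ : Equiv.Perm (Fin n)) (q : Fin n) (c : ℝ) : ℝ :=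
  min c (psum d τ ((τ.symm q : ℕ) + 1)) - min c (psum d τ (τ.symm q : ℕ))

lemma gov_step {n : ℕ} (d : Fin n → ℝ) (τ : Equiv.Perm (Fin n)) (q : Fin n) :
    psum d τ ((τ.symm q : ℕ) + 1) = psum d τ (τ.symm q : ℕ) + d q := by
  rw [psum_succ']; simp

lemma gov_nonneg {n : ℕ} (d : Fin n → ℝ) (hd : ∀ i, 0 < d i) (τ : Equiv.Perm (Fin n))
    (q : Fin n) (c : ℝ) : 0 ≤ gov d τ q c := by
  have := hd q
  unfold gov; rw [gov_step]; grind

lemma gov_le {n : ℕ} (d : Fin n → ℝ) (hd : ∀ i, 0 < d i) (τ : Equiv.Perm (Fin n))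
    (q : Fin n) (c : ℝ) : gov d τ q c ≤ d q := by
  have := hd q
  unfold gov; rw [gov_step]; grind

lemma gov_mono {n : ℕ} (d : Fin n → ℝ) (hd : ∀ i, 0 < d i) (τ : Equiv.Perm (Fin n))
    (q : Fin n) (a b : ℝ) (hab : a ≤ b) : gov d τ q a ≤ gov d τ q b := by
  have := hd q
  unfold gov; rw [gov_step]; grind

lemma gov_eq_full {n : ℕ} (d : Fin n → ℝ) (hd : ∀ i, 0 < d i) (τ : Equiv.Perm (Fin n))
    (q : Fin n) (c : ℝ) (h : psum d τ ((τ.symm q : ℕ) + 1) ≤ c) : gov d τ q c = d q := by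
  have := hd q
  unfold gov; rw [gov_step] at *; grind

lemma gov_eq_zero {n : ℕ} (d : Fin n → ℝ) (hd : ∀ i, 0 < d i) (τ : Equiv.Perm (Fin n))
    (q : Fin n) (c : ℝ) (h : c ≤ psum d τ (τ.symm q : ℕ)) : gov d τ q c = 0 := by
  have := hd q
  unfold gov; rw [gov_step] at *; grind

lemma gov_sum {n : ℕ} (d : Fin n → ℝ) (τ : Equiv.Perm (Fin n))
    (c : ℝ) (h0 : 0 ≤ c) (h1 : c ≤ ∑ i, d i) : ∑ q, gov d τ q c = c := by
  rw [← Equiv.sum_comp τ]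
  simp only [gov, Equiv.symm_apply_apply]
  rw [tele' (fun k => min c (psum d τ k))]
  simp [psum_zero', psum_last', h0, h1]

lemma exists_interval {n : ℕ} (P : ℕ → ℝ) (hn : 1 ≤ n) (c : ℝ) (h0 : P 0 ≤ c) (h1 : c ≤ P n) :
    ∃ m : Fin n, P m ≤ c ∧ c ≤ P ((m : ℕ) + 1) := by
  by_contra! h
  have : ∀ k, k ≤ n → P k ≤ c ∧ (0 < k → P k < c) := by
    intro k
    induction k with
    | zero => intro _; exact ⟨h0, by simp⟩
    | succ k ih =>
      intro hk
      have := h ⟨k, hk⟩ (ih (by omega)).1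
      exact ⟨this.le, fun _ => this⟩
  have := (this n le_rfl).2 (by omega)
  linarith

lemma th_eq {n : ℕ} (hn : 1 ≤ n) (d : Fin n → ℝ) (hd : ∀ i, 0 < d i) (y : Fin n → ℝ)
    (τ : Equiv.Perm (Fin n)) (hτ : Antitone (fun k => y (τ k) / d (τ k)))
    (c : ℝ) (h0 : 0 ≤ c) (h1 : c ≤ ∑ i, d i) :
    th d y c = ∑ q, gov d τ q c * (y q / d q) := by
  have key : ∀ i, (∑ j, max (y j - y i / d i * d j) 0) + y i / d i * c -
      ∑ q, gov d τ q c * (y q / d q) =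
      ∑ j, (max (y j - y i / d i * d j) 0 - gov d τ j c * (y j / d j - y i / d i)) := by
    intro i
    rw [Finset.sum_sub_distrib]
    simp only [mul_sub, Finset.sum_sub_distrib, ← Finset.sum_mul, gov_sum d τ c h0 h1]
    ring
  have hyj : ∀ i j, y j - y i / d i * d j = d j * (y j / d j - y i / d i) := by
    intro i j
    have := (hd j).ne'
    field_simp
  unfold th
  apply IsLeast.csInf_eq
  constructor
  · obtain ⟨m, hm1, hm2⟩ := exists_interval (psum d τ) hn c (by rwa [psum_zero'])
      (by rwa [psum_last'])
    refine ⟨τ m, hd _, ?_⟩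
    simp only
    rw [← sub_eq_zero, key]
    apply Finset.sum_eq_zero
    intro j _
    rw [hyj]
    have hr : ∀ a b : Fin n, a ≤ b → y (τ b) / d (τ b) ≤ y (τ a) / d (τ a) := fun a b h => hτ h
    rcases lt_trichotomy (τ.symm j) m with h | h | h
    · rw [gov_eq_full d hd τ j c ((psum_mono' d hd τ (by
        have : (τ.symm j : ℕ) < m := h
        omega)).trans hm1)]
      have := hr _ _ h.le
      simp only [Equiv.apply_symm_apply] at this
      rw [max_eq_left (mul_nonneg (hd j).le (by linarith))]
      ring
    · have : j = τ m := by rw [← h]; simp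
      subst this
      simp
    · rw [gov_eq_zero d hd τ j c (hm2.trans (psum_mono' d hd τ (by
        have : (m : ℕ) < τ.symm j := h
        omega)))]
      have := hr _ _ h.le
      simp only [Equiv.apply_symm_apply] at this
      rw [max_eq_right (mul_nonpos_of_nonneg_of_nonpos (hd j).le (by linarith))]
      ring
  · rintro _ ⟨i, _, rfl⟩
    simp only
    rw [← sub_nonneg, key]
    apply Finset.sum_nonneg
    intro j _
    rw [hyj, sub_nonneg]
    have a := gov_nonneg d hd τ j c
    have b := gov_le d hd τ j c
    rcases le_total 0 (y j / d j - y i / d i) with h | h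
    · exact (mul_le_mul_of_nonneg_right b h).trans (le_max_left _ _)
    · exact (mul_nonpos_of_nonneg_of_nonpos a h).trans (le_max_right _ _)

/-- Every point in the image of the extreme point map lies in the
thermomajorization polytope M_d(y). -/
theorem stmt8 (n : ℕ) (hn : 1 ≤ n) (d : Fin n → ℝ) (hd : ∀ i, 0 < d i)
    (y : Fin n → ℝ) (σ : Equiv.Perm (Fin n)) :
    ∃ A : Matrix (Fin n) (Fin n) ℝ, dStoch d A ∧ A.mulVec y = Emap d y σ := by
  obtain ⟨τ, hτ⟩ : ∃ τ : Equiv.Perm (Fin n), Antitone (fun k => y (τ k) / d (τ k)) := by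
    refine ⟨Tuple.sort (fun k => -(y k / d k)), ?_⟩
    intro a b h
    have := Tuple.monotone_sort (fun k => -(y k / d k)) h
    simpa using this
  have hlo : ∀ k, 0 ≤ psum d σ k := fun k => by
    rw [← psum_zero' d σ]; exact psum_mono' d hd σ (Nat.zero_le k)
  have hhi : ∀ k, k ≤ n → psum d σ k ≤ ∑ i, d i := fun k hk => by
    rw [← psum_last' d σ]; exact psum_mono' d hd σ hk
  refine ⟨Matrix.of fun p q => (gov d τ q (psum d σ ((σ.symm p : ℕ) + 1)) -
    gov d τ q (psum d σ (σ.symm p : ℕ))) / d q, ⟨?_, ?_, ?_⟩, ?_⟩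
  · intro p q
    exact div_nonneg (sub_nonneg.2 (gov_mono d hd τ q _ _ (psum_mono' d hd σ (Nat.le_succ _))))
      (hd q).le
  · intro q
    simp only [Matrix.of_apply]
    rw [← Finset.sum_div, ← Equiv.sum_comp σ]
    simp only [Equiv.symm_apply_apply]
    rw [tele' (fun k => gov d τ q (psum d σ k)), gov_eq_full d hd, gov_eq_zero d hd]
    · simp [(hd q).ne']
    · rw [psum_zero', ← psum_zero' d τ]; exact psum_mono' d hd τ (Nat.zero_le _)
    · rw [psum_last', ← psum_last' d τ]; exact psum_mono' d hd τ (τ.symm q).2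
  · ext p
    simp only [Matrix.mulVec, dotProduct, Matrix.of_apply]
    simp only [div_mul_cancel₀ _ (hd _).ne']
    rw [Finset.sum_sub_distrib, gov_sum d τ _ (hlo _) (hhi _ (σ.symm p).2),
      gov_sum d τ _ (hlo _) (hhi _ (σ.symm p).2.le), gov_step]
    ring
  · ext p
    simp only [Matrix.mulVec, dotProduct, Matrix.of_apply, Emap]
    rw [th_eq hn d hd y τ hτ _ (hlo _) (hhi _ (σ.symm p).2),
      th_eq hn d hd y τ hτ _ (hlo _) (hhi _ (σ.symm p).2.le), ← Finset.sum_sub_distrib]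
    apply Finset.sum_congr rfl
    intro q _
    ring
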